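/- In R = F₂[h₀, h₁, a, P]/(h₀h₁, h₁³, h₁a, a² + P h₀²), the kernel of multiplication by h₁ is the ideal generated by h₀, h₁², and a; explicitly ker(h₁) = h₀·F₂[h₀,P] ⊕ h₁²·F₂[P] ⊕ a·F₂[h₀,P] as an F₂-vector space. -/

import Mathlib

open MvPolynomial

/-- The defining ideal of the cohomology of classical `A(1)`:
variables `X 0 = h₀`, `X 1 = h₁`, `X 2 = a`, `X 3 = P`. -/
noncomputable def A1Ideal : Ideal (MvPolynomial (Fin 4) (ZMod 2)) :=
  Ideal.span {X 0 * X 1, (X 1) ^ 3, X 1 * X 2, (X 2) ^ 2 + X 3 * (X 0) ^ 2}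

/-- `R = F₂[h₀,h₁,a,P]/(h₀h₁, h₁³, h₁a, a² + Ph₀²)`. -/
noncomputable abbrev A1Cohomology : Type :=
  MvPolynomial (Fin 4) (ZMod 2) ⧸ A1Ideal

noncomputable def h₀ : A1Cohomology := Ideal.Quotient.mk A1Ideal (X 0)
noncomputable def h₁ : A1Cohomology := Ideal.Quotient.mk A1Ideal (X 1)
noncomputable def aElem : A1Cohomology := Ideal.Quotient.mk A1Ideal (X 2)
noncomputable def PElem : A1Cohomology := Ideal.Quotient.mk A1Ideal (X 3)


lemma rel_h0h1 : h₀ * h₁ = 0 := by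
  unfold h₀ h₁
  rw [← map_mul, Ideal.Quotient.eq_zero_iff_mem]
  exact Ideal.subset_span (by simp)

lemma rel_h1cube : h₁ ^ 3 = 0 := by
  unfold h₁
  rw [← map_pow, Ideal.Quotient.eq_zero_iff_mem]
  exact Ideal.subset_span (by simp)

lemma rel_h1a : h₁ * aElem = 0 := by
  unfold h₁ aElem
  rw [← map_mul, Ideal.Quotient.eq_zero_iff_mem]
  exact Ideal.subset_span (by simp)

lemma rel_asq : aElem ^ 2 + PElem * h₀ ^ 2 = 0 := by
  unfold h₀ aElem PElem
  rw [← map_pow, ← map_pow, ← map_mul, ← map_add, Ideal.Quotient.eq_zero_iff_mem]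
  exact Ideal.subset_span (by simp)

/-- The universal property of `R`. -/
lemma exists_lift {S : Type} [CommRing S] [Algebra (ZMod 2) S] (x y z w : S)
    (e1 : x * y = 0) (e2 : y ^ 3 = 0) (e3 : y * z = 0) (e4 : z ^ 2 + w * x ^ 2 = 0) :
    ∃ φ : A1Cohomology →ₐ[ZMod 2] S, φ h₀ = x ∧ φ h₁ = y ∧ φ aElem = z ∧ φ PElem = w := by
  have key : ∀ p ∈ A1Ideal, MvPolynomial.aeval (R := ZMod 2) ![x, y, z, w] p = 0 := by
    intro p hp
    have : A1Ideal ≤ RingHom.ker (MvPolynomial.aeval (R := ZMod 2) ![x, y, z, w]) := by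
      unfold A1Ideal
      rw [Ideal.span_le]
      rintro q (rfl | rfl | rfl | rfl) <;> simp [RingHom.mem_ker, e1, e2, e3, e4]
    exact this hp
  refine ⟨Ideal.Quotient.liftₐ A1Ideal (MvPolynomial.aeval ![x, y, z, w]) key, ?_, ?_, ?_, ?_⟩
  · exact (Ideal.Quotient.lift_mk A1Ideal _ key).trans (by simp)
  · exact (Ideal.Quotient.lift_mk A1Ideal _ key).trans (by simp)
  · exact (Ideal.Quotient.lift_mk A1Ideal _ key).trans (by simp)
  · exact (Ideal.Quotient.lift_mk A1Ideal _ key).trans (by simp)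

lemma lift_aeval {S : Type} [CommRing S] [Algebra (ZMod 2) S] (φ : A1Cohomology →ₐ[ZMod 2] S)
    (f : MvPolynomial (Fin 2) (ZMod 2)) :
    φ (MvPolynomial.aeval ![h₀, PElem] f) = MvPolynomial.aeval ![φ h₀, φ PElem] f := by
  rw [← AlgHom.comp_apply]
  congr 1
  ext i
  fin_cases i <;> simp

lemma aeval_incl (w : Polynomial (ZMod 2)) :
    MvPolynomial.aeval ![h₀, PElem]
      (Polynomial.aeval (X 1 : MvPolynomial (Fin 2) (ZMod 2)) w) = Polynomial.aeval PElem w := by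
  rw [← Polynomial.aeval_algHom_apply]
  simp

/-- Normal form of elements of `R`. -/
lemma normal_form (x : A1Cohomology) :
    ∃ (f g : MvPolynomial (Fin 2) (ZMod 2)) (w u v : Polynomial (ZMod 2)),
      x = h₀ * (MvPolynomial.aeval ![h₀, PElem] f) + aElem * (MvPolynomial.aeval ![h₀, PElem] g)
        + Polynomial.aeval PElem w + h₁ * Polynomial.aeval PElem u
        + h₁ ^ 2 * Polynomial.aeval PElem v := by
  obtain ⟨p, rfl⟩ := Ideal.Quotient.mk_surjective x
  have r1 := rel_h0h1
  have r2 := rel_h1cube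
  have r3 := rel_h1a
  have r4 := rel_asq
  induction p using MvPolynomial.induction_on with
  | C c =>
    refine ⟨0, 0, Polynomial.C c, 0, 0, ?_⟩
    simp only [map_zero, mul_zero, add_zero, zero_add, Polynomial.aeval_C]
    rfl
  | add p q hp hq =>
    obtain ⟨f, g, w, u, v, h⟩ := hp
    obtain ⟨f', g', w', u', v', h'⟩ := hq
    refine ⟨f + f', g + g', w + w', u + u', v + v', ?_⟩
    rw [map_add, h, h']
    simp only [map_add]
    ring
  | mul_X p i hp =>
    obtain ⟨f, g, w, u, v, h⟩ := hp
    rw [map_mul, h]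
    generalize hF : MvPolynomial.aeval ![h₀, PElem] f = F
    generalize hG : MvPolynomial.aeval ![h₀, PElem] g = G
    have hW := aeval_incl w
    generalize hU : Polynomial.aeval PElem u = U
    generalize hV : Polynomial.aeval PElem v = V
    generalize hW' : Polynomial.aeval PElem w = W at hW
    fin_cases i
    · refine ⟨X 0 * f + Polynomial.aeval (X 1) w, X 0 * g, 0, 0, 0, ?_⟩
      change _ * h₀ = _
      simp only [map_add, map_mul, map_zero, hW, hF, hG, aeval_X, Matrix.cons_val_zero]
      linear_combination (U + h₁ * V) * r1
    · refine ⟨0, 0, 0, w, u, ?_⟩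
      change _ * h₁ = _
      simp only [map_zero, hW', hU]
      linear_combination F * r1 + G * r3 + V * r2
    · refine ⟨-(X 0 * X 1 * g), X 0 * f + Polynomial.aeval (X 1) w, 0, 0, 0, ?_⟩
      change _ * aElem = _
      simp only [map_add, map_mul, map_neg, map_zero, hW, hF, hG, aeval_X, Matrix.cons_val_zero,
        Matrix.cons_val_one]
      linear_combination G * r4 + (U + h₁ * V) * r3
    · refine ⟨X 1 * f, X 1 * g, Polynomial.X * w, Polynomial.X * u, Polynomial.X * v, ?_⟩
      change _ * PElem = _
      simp only [map_mul, hW', hF, hG, hU, hV, aeval_X, Matrix.cons_val_one, Polynomial.aeval_X,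
        Matrix.cons_val_zero]
      ring

lemma aeval_CX (w : Polynomial (ZMod 2)) :
    Polynomial.aeval (Polynomial.C Polynomial.X : Polynomial (Polynomial (ZMod 2))) w
      = Polynomial.C w := by
  induction w using Polynomial.induction_on' with
  | add p q hp hq => simp [hp, hq]
  | monomial n c =>
    rw [← Polynomial.C_mul_X_pow_eq_monomial]
    simp only [map_mul, map_pow, Polynomial.aeval_C, Polynomial.aeval_X]
    rfl

lemma exists_trunc : ∃ (S : Type) (_ : CommRing S) (_ : Algebra (ZMod 2) S)
    (m : Polynomial (Polynomial (ZMod 2)) →ₐ[ZMod 2] S),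
    ∀ p, m p = 0 ↔ Polynomial.X ^ 3 ∣ p :=
  ⟨Polynomial (Polynomial (ZMod 2)) ⧸
      (Ideal.span {Polynomial.X ^ 3} : Ideal (Polynomial (Polynomial (ZMod 2)))),
    inferInstance, inferInstance, Ideal.Quotient.mkₐ (ZMod 2) _, fun _ =>
    Ideal.Quotient.eq_zero_iff_mem.trans Ideal.mem_span_singleton⟩

/-- Detection of the `h₁`-tower. -/
lemma detect_tower (f g : MvPolynomial (Fin 2) (ZMod 2)) (w u v : Polynomial (ZMod 2))
    (h : h₀ * (MvPolynomial.aeval ![h₀, PElem] f) + aElem * (MvPolynomial.aeval ![h₀, PElem] g)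
        + Polynomial.aeval PElem w + h₁ * Polynomial.aeval PElem u
        + h₁ ^ 2 * Polynomial.aeval PElem v = 0) : w = 0 ∧ u = 0 ∧ v = 0 := by
  obtain ⟨S, _, _, m, hm⟩ := exists_trunc
  obtain ⟨φ, e0, e1, e2, e3⟩ := exists_lift (0 : S)
    (m Polynomial.X) 0 (m (Polynomial.C Polynomial.X)) (by simp)
    (by rw [← map_pow, hm]) (by simp) (by simp)
  have h2 := congrArg φ h
  simp only [map_add, map_mul, map_pow, e0, e1, e2, zero_mul, map_zero, zero_add,
    ← Polynomial.aeval_algHom_apply, e3] at h2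
  simp only [Polynomial.aeval_algHom_apply, aeval_CX, ← map_mul, ← map_add, ← map_pow] at h2
  rw [hm, Polynomial.X_pow_dvd_iff] at h2
  have a0 := h2 0 (by norm_num)
  have a1 := h2 1 (by norm_num)
  have a2 := h2 2 (by norm_num)
  simp [Polynomial.coeff_X_pow, Polynomial.coeff_X, Polynomial.coeff_C] at a0 a1 a2
  exact ⟨a0, a1, a2⟩

lemma pderiv_sq (f : MvPolynomial (Fin 2) (ZMod 2)) :
    pderiv 1 (MvPolynomial.aeval
      ![(X 0 : MvPolynomial (Fin 2) (ZMod 2)), X 1 ^ 2] f) = 0 := by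
  have two : (2 : MvPolynomial (Fin 2) (ZMod 2)) = 0 := CharTwo.two_eq_zero
  induction f using MvPolynomial.induction_on with
  | C c => simp
  | add p q hp hq => rw [map_add, map_add, hp, hq, add_zero]
  | mul_X p i hp =>
    rw [map_mul, Derivation.leibniz, hp]
    fin_cases i <;> simp [Derivation.leibniz_pow, pderiv_X, two]

lemma aeval_sq_inj (g : MvPolynomial (Fin 2) (ZMod 2))
    (h : MvPolynomial.aeval ![(X 0 : MvPolynomial (Fin 2) (ZMod 2)), X 1 ^ 2] g = 0) : g = 0 := by
  have h2 := congrArg (MvPolynomial.aeval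
    ![(X 0 ^ 2 : MvPolynomial (Fin 2) (ZMod 2)), X 1]) h
  rw [map_zero, ← AlgHom.comp_apply] at h2
  have e : (MvPolynomial.aeval (R := ZMod 2)
      ![(X 0 ^ 2 : MvPolynomial (Fin 2) (ZMod 2)), X 1]).comp
      (MvPolynomial.aeval ![(X 0 : MvPolynomial (Fin 2) (ZMod 2)), X 1 ^ 2])
      = MvPolynomial.expand 2 := by
    ext1 i
    fin_cases i <;> simp
  rw [e, MvPolynomial.expand_zmod] at h2
  exact pow_eq_zero_iff (two_ne_zero) |>.mp h2

/-- Detection of the `h₀`-towers. -/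
lemma detect_fg (f g : MvPolynomial (Fin 2) (ZMod 2))
    (h : h₀ * (MvPolynomial.aeval ![h₀, PElem] f) + aElem * (MvPolynomial.aeval ![h₀, PElem] g)
      = 0) : f = 0 ∧ g = 0 := by
  obtain ⟨φ, e0, e1, e2, e3⟩ := exists_lift (X 0 : MvPolynomial (Fin 2) (ZMod 2))
    0 (X 0 * X 1) (X 1 ^ 2) (by simp) (by simp) (by simp)
    (by
      have two : (2 : MvPolynomial (Fin 2) (ZMod 2)) = 0 := CharTwo.two_eq_zero
      linear_combination (X 0 ^ 2 * X 1 ^ 2) * two)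
  have h2 := congrArg φ h
  simp only [map_add, map_mul, lift_aeval, e0, e2, e3, map_zero] at h2
  rw [mul_assoc, ← mul_add] at h2
  have h3 := (mul_eq_zero.mp h2).resolve_left (X_ne_zero 0)
  have h4 := congrArg (pderiv 1) h3
  rw [map_add, Derivation.leibniz, pderiv_sq, pderiv_sq] at h4
  simp at h4
  have hg := aeval_sq_inj g h4
  subst hg
  simp at h3
  exact ⟨aeval_sq_inj f h3, rfl⟩

/-- In `R = F₂[h₀,h₁,a,P]/(h₀h₁, h₁³, h₁a, a² + Ph₀²)`, the kernel of multiplication by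
`h₁` is `h₀·F₂[h₀,P] ⊕ h₁²·F₂[P] ⊕ a·F₂[h₀,P]` as an `F₂`-vector space: every
`h₁`-torsion element decomposes in this form, and the decomposition is unique. -/
theorem ker_h1_description :
    (∀ x : A1Cohomology,
      h₁ * x = 0 ↔
        ∃ (f g : MvPolynomial (Fin 2) (ZMod 2)) (u : Polynomial (ZMod 2)),
          x = h₀ * (MvPolynomial.aeval ![h₀, PElem] f)
            + h₁ ^ 2 * (Polynomial.aeval PElem u)
            + aElem * (MvPolynomial.aeval ![h₀, PElem] g)) ∧
    (∀ (f g f' g' : MvPolynomial (Fin 2) (ZMod 2)) (u u' : Polynomial (ZMod 2)),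
      h₀ * (MvPolynomial.aeval ![h₀, PElem] f)
          + h₁ ^ 2 * (Polynomial.aeval PElem u)
          + aElem * (MvPolynomial.aeval ![h₀, PElem] g)
        = h₀ * (MvPolynomial.aeval ![h₀, PElem] f')
          + h₁ ^ 2 * (Polynomial.aeval PElem u')
          + aElem * (MvPolynomial.aeval ![h₀, PElem] g') →
      h₀ * (MvPolynomial.aeval ![h₀, PElem] f)
          = h₀ * (MvPolynomial.aeval ![h₀, PElem] f') ∧
      h₁ ^ 2 * (Polynomial.aeval PElem u) = h₁ ^ 2 * (Polynomial.aeval PElem u') ∧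
      aElem * (MvPolynomial.aeval ![h₀, PElem] g)
          = aElem * (MvPolynomial.aeval ![h₀, PElem] g')) := by
  have r1 := rel_h0h1
  have r2 := rel_h1cube
  have r3 := rel_h1a
  constructor
  · intro x
    constructor
    · intro hx
      obtain ⟨f, g, w, u, v, rfl⟩ := normal_form x
      obtain ⟨-, hw, hu⟩ := detect_tower 0 0 0 w u (by
        simp only [map_zero]
        linear_combination hx - (MvPolynomial.aeval ![h₀, PElem] f) * r1
          - (MvPolynomial.aeval ![h₀, PElem] g) * r3 - (Polynomial.aeval PElem v) * r2)
      subst hw hu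
      refine ⟨f, g, v, ?_⟩
      simp only [map_zero]
      ring
    · rintro ⟨f, g, u, rfl⟩
      linear_combination (MvPolynomial.aeval ![h₀, PElem] f) * r1
          + (MvPolynomial.aeval ![h₀, PElem] g) * r3 + (Polynomial.aeval PElem u) * r2
  · intro f g f' g' u u' h
    obtain ⟨-, -, hu⟩ := detect_tower (f - f') (g - g') 0 0 (u - u') (by
      simp only [map_zero, map_sub]
      linear_combination h)
    obtain rfl := sub_eq_zero.mp hu
    obtain ⟨hf, hg⟩ := detect_fg (f - f') (g - g') (by
      simp only [map_sub]
      linear_combination h)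
    obtain rfl := sub_eq_zero.mp hf
    obtain rfl := sub_eq_zero.mp hg
    exact ⟨rfl, rfl, rfl⟩
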